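/- Let δ, μ, ε, τ ∈ ℂ with Re(δ) > 0 and Re(τ) > max{0, Re(μ−ε)}. Then for x > 0, the left-sided Saigo fractional integral of the power function satisfies (I₀₊^{δ,μ,ε} t^{τ−1})(x) = [Γ(τ) Γ(τ+ε−μ)] / [Γ(τ−μ) Γ(τ+ε+δ)] · x^{τ−μ−1}. -/

import Mathlib

open MeasureTheory

/-- Pochhammer symbol `(a)_n = a (a+1) ⋯ (a+n−1)`. -/
noncomputable def poch (a : ℂ) (n : ℕ) : ℂ := ∏ i ∈ Finset.range n, (a + i)

/-- Generalized hypergeometric function `ₚF_q(a₁,…,a_p; c₁,…,c_q; x)`. -/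
noncomputable def genHyp (as cs : List ℂ) (x : ℂ) : ℂ :=
  ∑' k : ℕ, ((as.map (fun a => poch a k)).prod / (cs.map (fun c => poch c k)).prod)
    * x ^ k / (Nat.factorial k)

/-- Appell's double hypergeometric function `F₃(a,a′,b,b′;c;x,y)`. -/
noncomputable def appellF3 (a a' b b' c x y : ℂ) : ℂ :=
  ∑' mn : ℕ × ℕ, poch a mn.1 * poch a' mn.2 * poch b mn.1 * poch b' mn.2 /
    (poch c (mn.1 + mn.2) * (Nat.factorial mn.1) * (Nat.factorial mn.2)) * x ^ mn.1 * y ^ mn.2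

/-- Generalized binomial coefficient `binom(a,k) = a(a−1)⋯(a−k+1)/k!`. -/
noncomputable def gbinom (a : ℂ) (k : ℕ) : ℂ := (∏ i ∈ Finset.range k, (a - i)) / (Nat.factorial k)

/-- Jacobi type orthogonal polynomial `M_n^{(p,q)}(x)`. -/
noncomputable def jacobiM (n : ℕ) (p q x : ℂ) : ℂ :=
  (-1) ^ n * (Nat.factorial n) * ∑ k ∈ Finset.range (n + 1),
    gbinom (p - n - 1) k * gbinom (q + n) (n - k) * (-x) ^ k

/-- Left-sided Marichev–Saigo–Maeda fractional integral operator. -/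
noncomputable def msmLeft (δ δ' μ μ' ε : ℂ) (f : ℝ → ℂ) (x : ℝ) : ℂ :=
  (x : ℂ) ^ (-δ) / Complex.Gamma ε *
    ∫ t in Set.Ioo (0 : ℝ) x, ((x - t : ℝ) : ℂ) ^ (ε - 1) * (t : ℂ) ^ (-δ') *
      appellF3 δ δ' μ μ' ε ((1 - t / x : ℝ) : ℂ) ((1 - x / t : ℝ) : ℂ) * f t

/-- Right-sided Marichev–Saigo–Maeda fractional integral operator. -/
noncomputable def msmRight (δ δ' μ μ' ε : ℂ) (f : ℝ → ℂ) (x : ℝ) : ℂ :=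
  (x : ℂ) ^ (-δ') / Complex.Gamma ε *
    ∫ t in Set.Ioi x, ((t - x : ℝ) : ℂ) ^ (ε - 1) * (t : ℂ) ^ (-δ) *
      appellF3 δ δ' μ μ' ε ((1 - t / x : ℝ) : ℂ) ((1 - x / t : ℝ) : ℂ) * f t

/-- Left-sided Saigo fractional integral operator. -/
noncomputable def saigoLeft (δ μ ε : ℂ) (f : ℝ → ℂ) (x : ℝ) : ℂ :=
  (x : ℂ) ^ (-δ - μ) / Complex.Gamma δ *
    ∫ t in Set.Ioo (0 : ℝ) x, ((x - t : ℝ) : ℂ) ^ (δ - 1) *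
      genHyp [δ + μ, -ε] [δ] ((1 - t / x : ℝ) : ℂ) * f t

/-- Right-sided Saigo fractional integral operator. -/
noncomputable def saigoRight (δ μ ε : ℂ) (f : ℝ → ℂ) (x : ℝ) : ℂ :=
  (1 / Complex.Gamma δ) *
    ∫ t in Set.Ioi x, ((t - x : ℝ) : ℂ) ^ (δ - 1) * (t : ℂ) ^ (-δ - μ) *
      genHyp [δ + μ, -ε] [δ] ((1 - x / t : ℝ) : ℂ) * f t

/-- Left-sided Riemann–Liouville fractional integral operator. -/
noncomputable def rlLeft (δ : ℂ) (f : ℝ → ℂ) (x : ℝ) : ℂ :=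
  (1 / Complex.Gamma δ) * ∫ t in Set.Ioo (0 : ℝ) x, ((x - t : ℝ) : ℂ) ^ (δ - 1) * f t

/-- Right-sided Riemann–Liouville fractional integral operator. -/
noncomputable def rlRight (δ : ℂ) (f : ℝ → ℂ) (x : ℝ) : ℂ :=
  (1 / Complex.Gamma δ) * ∫ t in Set.Ioi x, ((t - x : ℝ) : ℂ) ^ (δ - 1) * f t

/-- Left-sided Erdélyi–Kober fractional integral operator `I⁺_{ε,δ}`. -/
noncomputable def ekLeft (ε δ : ℂ) (f : ℝ → ℂ) (x : ℝ) : ℂ :=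
  (x : ℂ) ^ (-δ - ε) / Complex.Gamma δ *
    ∫ t in Set.Ioo (0 : ℝ) x, ((x - t : ℝ) : ℂ) ^ (δ - 1) * (t : ℂ) ^ ε * f t

/-- Right-sided Erdélyi–Kober fractional integral operator `K⁻_{ε,δ}`. -/
noncomputable def ekRight (ε δ : ℂ) (f : ℝ → ℂ) (x : ℝ) : ℂ :=
  (x : ℂ) ^ ε / Complex.Gamma δ *
    ∫ t in Set.Ioi x, ((t - x : ℝ) : ℂ) ^ (δ - 1) * (t : ℂ) ^ (-δ - ε) * f t

/-- Left-sided Marichev–Saigo–Maeda fractional derivative operator. -/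
noncomputable def msmDLeft (δ δ' μ μ' ε : ℂ) (f : ℝ → ℂ) (x : ℝ) : ℂ :=
  iteratedDeriv (⌊ε.re⌋ + 1).toNat
    (msmLeft (-δ') (-δ) (-μ' + ((⌊ε.re⌋ + 1 : ℤ) : ℂ)) (-μ) (-ε + ((⌊ε.re⌋ + 1 : ℤ) : ℂ)) f) x

/-- Right-sided Marichev–Saigo–Maeda fractional derivative operator. -/
noncomputable def msmDRight (δ δ' μ μ' ε : ℂ) (f : ℝ → ℂ) (x : ℝ) : ℂ :=
  (-1 : ℂ) ^ (⌊ε.re⌋ + 1).toNat * iteratedDeriv (⌊ε.re⌋ + 1).toNat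
    (msmRight (-δ') (-δ) (-μ') (-μ + ((⌊ε.re⌋ + 1 : ℤ) : ℂ)) (-ε + ((⌊ε.re⌋ + 1 : ℤ) : ℂ)) f) x

/-!
Expanding `₂F₁ (δ + μ) (-ε) δ (1 - t / x)` and integrating termwise against the beta density
`(x - t) ^ (δ - 1) * t ^ (τ - 1)` replaces the lower parameter `δ` by `δ + τ` and the argument by
`1`, so the integral is evaluated by Gauss' summation theorem. That theorem follows from the
contiguous relation `c (c - a - b) F(c) = (c - a) (c - b) F(c + 1)` for `F(c) = ₂F₁ a b c 1`, which
is a telescoping sum: iterate it, and use `F(c + m) → 1` together with Euler's limit formula for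
`Gamma`.
-/

section Pochhammer

open Complex Filter Topology

theorem poch_eq_ascPochhammer_eval (a : ℂ) (n : ℕ) : poch a n = (ascPochhammer ℂ n).eval a := by
  induction n with
  | zero => simp [poch]
  | succ n ih => rw [poch, Finset.prod_range_succ, ← poch, ih, ascPochhammer_succ_eval]

theorem genHyp_two_one (a b c x : ℂ) : genHyp [a, b] [c] x = ₂F₁ a b c x := by
  rw [genHyp, ordinaryHypergeometric_eq_tsum]
  refine tsum_congr fun n => ?_
  simp only [List.map_cons, List.map_nil, List.prod_cons, List.prod_nil, mul_one,
    poch_eq_ascPochhammer_eval, smul_eq_mul]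
  ring

theorem ne_neg_natCast_of_re_pos {z : ℂ} (hz : 0 < z.re) (n : ℕ) : z ≠ -n := by
  rintro rfl
  exact absurd hz (by simp)

theorem ascPochhammer_eval_ne_zero {z : ℂ} (hz : ∀ n : ℕ, z ≠ -n) (n : ℕ) :
    (ascPochhammer ℂ n).eval z ≠ 0 := by
  rw [Ne, ascPochhammer_eval_eq_zero_iff]
  rintro ⟨k, -, hk⟩
  exact hz k (by rw [hk, neg_neg])

theorem Gamma_add_natCast {z : ℂ} (hz : ∀ n : ℕ, z ≠ -n) (n : ℕ) :
    Gamma (z + n) = Gamma z * (ascPochhammer ℂ n).eval z := by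
  rw [← Gamma_add_nat_div_Gamma_eq z hz, mul_div_cancel₀ _ (Gamma_ne_zero hz)]

theorem mul_ascPochhammer_eval_add_one (z : ℂ) (n : ℕ) :
    z * (ascPochhammer ℂ n).eval (z + 1) = (ascPochhammer ℂ n).eval z * (z + n) := by
  rw [← ascPochhammer_succ_eval, ascPochhammer_succ_left]
  simp

theorem norm_le_norm_of_re_le_of_abs_im_le {z w : ℂ} (hz : 0 ≤ z.re) (hre : z.re ≤ w.re)
    (him : |z.im| ≤ |w.im|) : ‖z‖ ≤ ‖w‖ := by
  rw [norm_eq_sqrt_sq_add_sq, norm_eq_sqrt_sq_add_sq]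
  gcongr √(?_ + ?_)
  · gcongr
  · exact sq_le_sq.mpr him

theorem norm_ascPochhammer_eval_le {z w : ℂ} (hz : 0 ≤ z.re) (hre : z.re ≤ w.re)
    (him : |z.im| ≤ |w.im|) (n : ℕ) :
    ‖(ascPochhammer ℂ n).eval z‖ ≤ ‖(ascPochhammer ℂ n).eval w‖ := by
  induction n with
  | zero => simp
  | succ n ih =>
    rw [ascPochhammer_succ_eval, ascPochhammer_succ_eval, norm_mul, norm_mul]
    gcongr
    apply norm_le_norm_of_re_le_of_abs_im_le
    · simpa only [add_re, natCast_re] using add_nonneg hz n.cast_nonneg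
    · simpa only [add_re, natCast_re, add_le_add_iff_right] using hre
    · simpa only [add_im, natCast_im, add_zero] using him

theorem GammaSeq_eq_div_ascPochhammer_eval (s : ℂ) (n : ℕ) :
    GammaSeq s n = (n : ℂ) ^ s * n.factorial / (ascPochhammer ℂ (n + 1)).eval s := by
  rw [← poch_eq_ascPochhammer_eval]
  rfl

-- At the poles of `Gamma` the limit is `0`, in accordance with the convention `Gamma (-n) = 0`.
theorem tendsto_ascPochhammer_eval_div_factorial_mul_cpow (s : ℂ) :
    Tendsto (fun n : ℕ => (ascPochhammer ℂ n).eval s / (n.factorial * (n : ℂ) ^ (s - 1)))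
      atTop (𝓝 (Gamma s)⁻¹) := by
  by_cases hs : ∀ n : ℕ, s ≠ -n
  · have hlim := ((GammaSeq_tendsto_Gamma s).inv₀ (Gamma_ne_zero hs)).mul
      (tendsto_natCast_div_add_atTop s)
    rw [mul_one] at hlim
    refine hlim.congr' ?_
    filter_upwards [eventually_ne_atTop 0] with n hn
    have hn' : (n : ℂ) ≠ 0 := mod_cast hn
    have hsn : s + n ≠ 0 := fun h => hs n (eq_neg_of_add_eq_zero_left h)
    have hpow : (n : ℂ) ^ s ≠ 0 := cpow_ne_zero_iff.mpr (.inl hn')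
    rw [GammaSeq_eq_div_ascPochhammer_eval, ascPochhammer_succ_eval, cpow_sub _ _ hn', cpow_one,
      add_comm (n : ℂ) s]
    field_simp
  · push Not at hs
    obtain ⟨m, rfl⟩ := hs
    rw [Gamma_neg_nat_eq_zero, inv_zero]
    refine tendsto_const_nhds.congr' ?_
    filter_upwards [eventually_gt_atTop m] with n hn
    rw [ascPochhammer_eval_neg_coe_nat_of_lt hn, zero_div]

theorem tendsto_ascPochhammer_eval_ratio_mul_cpow (a b : ℂ) {c d : ℂ} (hc : ∀ n : ℕ, c ≠ -n)
    (hd : ∀ n : ℕ, d ≠ -n) :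
    Tendsto (fun n : ℕ => (ascPochhammer ℂ n).eval a * (ascPochhammer ℂ n).eval b /
        ((ascPochhammer ℂ n).eval c * (ascPochhammer ℂ n).eval d) * (n : ℂ) ^ (c + d - a - b))
      atTop (𝓝 (Gamma c * Gamma d / (Gamma a * Gamma b))) := by
  have hlim := ((tendsto_ascPochhammer_eval_div_factorial_mul_cpow a).mul
    (tendsto_ascPochhammer_eval_div_factorial_mul_cpow b)).div
    ((tendsto_ascPochhammer_eval_div_factorial_mul_cpow c).mul
    (tendsto_ascPochhammer_eval_div_factorial_mul_cpow d))
    (mul_ne_zero (inv_ne_zero (Gamma_ne_zero hc)) (inv_ne_zero (Gamma_ne_zero hd)))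
  rw [← mul_inv, ← mul_inv, inv_div_inv] at hlim
  refine hlim.congr' ?_
  filter_upwards [eventually_ne_atTop 0] with n hn
  have hn' : (n : ℂ) ≠ 0 := mod_cast hn
  have hfact : (n.factorial : ℂ) ≠ 0 := mod_cast n.factorial_ne_zero
  have hpow (s : ℂ) : (n : ℂ) ^ s ≠ 0 := cpow_ne_zero_iff.mpr (.inl hn')
  have hcn := ascPochhammer_eval_ne_zero hc n
  have hdn := ascPochhammer_eval_ne_zero hd n
  rw [show c + d - a - b = (c - 1) + (d - 1) - ((a - 1) + (b - 1)) by ring, cpow_sub _ _ hn',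
    cpow_add _ _ hn', cpow_add _ _ hn', Pi.div_apply]
  field_simp [hpow]

end Pochhammer

section GaussSummation

open Complex Filter Topology Asymptotics

variable {a b c : ℂ}

theorem ordinaryHypergeometricCoefficient_succ (hc : ∀ n : ℕ, c ≠ -n) (n : ℕ) :
    (n + 1) * (c + n) * ordinaryHypergeometricCoefficient a b c (n + 1) =
      (a + n) * (b + n) * ordinaryHypergeometricCoefficient a b c n := by
  have hcn : c + n ≠ 0 := fun h => hc n (eq_neg_of_add_eq_zero_left h)
  have hpoch := ascPochhammer_eval_ne_zero hc n
  simp only [ordinaryHypergeometricCoefficient, ascPochhammer_succ_eval, Nat.factorial_succ,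
    Nat.cast_mul, Nat.cast_succ]
  field_simp

theorem ordinaryHypergeometricCoefficient_add_one_right (hc : ∀ n : ℕ, c ≠ -n) (n : ℕ) :
    (c + n) * ordinaryHypergeometricCoefficient a b (c + 1) n =
      c * ordinaryHypergeometricCoefficient a b c n := by
  have hc₀ : c ≠ 0 := by simpa using hc 0
  have hcn : c + n ≠ 0 := fun h => hc n (eq_neg_of_add_eq_zero_left h)
  have hpoch := ascPochhammer_eval_ne_zero hc n
  have hshift : (ascPochhammer ℂ n).eval (c + 1) = (ascPochhammer ℂ n).eval c * (c + n) / c := by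
    rw [← mul_ascPochhammer_eval_add_one, mul_div_cancel_left₀ _ hc₀]
  rw [ordinaryHypergeometricCoefficient, ordinaryHypergeometricCoefficient, hshift]
  field_simp

theorem isBigO_ordinaryHypergeometricCoefficient (a b : ℂ) (hc : ∀ n : ℕ, c ≠ -n) :
    ordinaryHypergeometricCoefficient a b c =O[atTop]
      fun n : ℕ => (n : ℝ) ^ ((a + b - c).re - 1) := by
  have hratio := (tendsto_ascPochhammer_eval_ratio_mul_cpow a b hc
    (ne_neg_natCast_of_re_pos (z := 1) one_pos)).isBigO_one ℝ
  have hpow : (fun n : ℕ => (n : ℂ) ^ (a + b - c - 1)) =O[atTop]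
      fun n : ℕ => (n : ℝ) ^ ((a + b - c).re - 1) := by
    simpa using isBigO_cpow_rpow (l := atTop) (f := fun n : ℕ => (n : ℂ))
      (g := fun _ => a + b - c - 1) (isBoundedUnder_const)
  refine ((hratio.mul hpow).congr' ?_ (.of_eq (funext fun n => one_mul _)))
  filter_upwards [eventually_ne_atTop 0] with n hn
  rw [mul_assoc, ← cpow_add _ _ (Nat.cast_ne_zero.mpr hn), ascPochhammer_eval_one,
    show c + 1 - a - b + (a + b - c - 1) = 0 by ring, cpow_zero, ordinaryHypergeometricCoefficient]
  ring

theorem summable_ordinaryHypergeometricCoefficient (hc : ∀ n : ℕ, c ≠ -n)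
    (h : 0 < (c - a - b).re) : Summable (ordinaryHypergeometricCoefficient a b c) := by
  refine summable_of_isBigO_nat (Real.summable_nat_rpow.mpr ?_)
    (isBigO_ordinaryHypergeometricCoefficient a b hc)
  simp only [sub_re, add_re] at h ⊢
  linarith

theorem tendsto_natCast_mul_ordinaryHypergeometricCoefficient (hc : ∀ n : ℕ, c ≠ -n)
    (h : 0 < (c - a - b).re) :
    Tendsto (fun n : ℕ => n * ordinaryHypergeometricCoefficient a b c n) atTop (𝓝 0) := by
  have hO := (isBigO_refl (fun n : ℕ => (n : ℂ)) atTop).norm_right.mul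
    (isBigO_ordinaryHypergeometricCoefficient a b hc)
  refine hO.trans_tendsto (((tendsto_rpow_neg_atTop h).comp tendsto_natCast_atTop_atTop).congr' ?_)
  filter_upwards [eventually_gt_atTop 0] with n hn
  have hn' : (0 : ℝ) < n := mod_cast hn
  rw [Function.comp_apply, norm_natCast, ← Real.rpow_one_add' hn'.le]
  · congr 1
    simp only [sub_re, add_re]
    ring
  · simp only [sub_re, add_re] at h ⊢
    linarith

theorem ordinaryHypergeometric_one_eq_tsum (a b c : ℂ) :
    ₂F₁ a b c (1 : ℂ) = ∑' n, ordinaryHypergeometricCoefficient a b c n := by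
  simp [ordinaryHypergeometric_eq_tsum]

theorem ordinaryHypergeometric_one_contiguous (hc : ∀ n : ℕ, c ≠ -n) (h : 0 < (c - a - b).re) :
    c * (c - a - b) * ₂F₁ a b c (1 : ℂ) = (c - a) * (c - b) * ₂F₁ a b (c + 1) (1 : ℂ) := by
  have hc' (n : ℕ) : c + 1 ≠ -n := fun hn => hc (n + 1) (by push_cast; linear_combination hn)
  have h' : 0 < (c + 1 - a - b).re := by
    simp only [sub_re, add_re, one_re] at h ⊢
    linarith
  have htelescope (n : ℕ) :
      c * (c - a - b) * ordinaryHypergeometricCoefficient a b c n -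
          (c - a) * (c - b) * ordinaryHypergeometricCoefficient a b (c + 1) n =
        c * (n * ordinaryHypergeometricCoefficient a b c n) -
          c * ((n + 1 : ℕ) * ordinaryHypergeometricCoefficient a b c (n + 1)) := by
    have hcn : c + n ≠ 0 := fun h => hc n (eq_neg_of_add_eq_zero_left h)
    apply mul_left_cancel₀ hcn
    push_cast
    linear_combination c * ordinaryHypergeometricCoefficient_succ (a := a) (b := b) hc n -
      (c - a) * (c - b) * ordinaryHypergeometricCoefficient_add_one_right (a := a) (b := b) hc n
  have hsum := ((summable_ordinaryHypergeometricCoefficient hc h).hasSum.mul_left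
    (c * (c - a - b))).sub ((summable_ordinaryHypergeometricCoefficient hc' h').hasSum.mul_left
    ((c - a) * (c - b))) |>.tendsto_sum_nat
  simp only [htelescope, Finset.sum_range_sub', Nat.cast_zero, zero_mul, mul_zero,
    zero_sub] at hsum
  have hlim := ((tendsto_natCast_mul_ordinaryHypergeometricCoefficient hc h).const_mul c).neg
  rw [mul_zero, neg_zero] at hlim
  rw [ordinaryHypergeometric_one_eq_tsum, ordinaryHypergeometric_one_eq_tsum]
  exact sub_eq_zero.mp (tendsto_nhds_unique hsum hlim)

theorem ascPochhammer_mul_ordinaryHypergeometric_one (hc : ∀ n : ℕ, c ≠ -n)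
    (h : 0 < (c - a - b).re) (m : ℕ) :
    (ascPochhammer ℂ m).eval c * (ascPochhammer ℂ m).eval (c - a - b) * ₂F₁ a b c (1 : ℂ) =
      (ascPochhammer ℂ m).eval (c - a) * (ascPochhammer ℂ m).eval (c - b) *
        ₂F₁ a b (c + m) (1 : ℂ) := by
  induction m with
  | zero => simp
  | succ m ih =>
    have hcm (n : ℕ) : c + m ≠ -n := fun hn => hc (m + n) (by push_cast; linear_combination hn)
    have hm : 0 < (c + m - a - b).re := by
      simp only [sub_re, add_re, natCast_re] at h ⊢
      linarith [m.cast_nonneg (α := ℝ)]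
    simp only [ascPochhammer_succ_eval, Nat.cast_succ, ← add_assoc]
    linear_combination (c + m) * (c - a - b + m) * ih +
      (ascPochhammer ℂ m).eval (c - a) * (ascPochhammer ℂ m).eval (c - b) *
        ordinaryHypergeometric_one_contiguous hcm hm

theorem norm_ordinaryHypergeometricCoefficient_le {d : ℂ} (hc : 0 < c.re) (hre : c.re ≤ d.re)
    (him : |c.im| ≤ |d.im|) (n : ℕ) :
    ‖ordinaryHypergeometricCoefficient a b d n‖ ≤ ‖ordinaryHypergeometricCoefficient a b c n‖ := by
  have hpos : 0 < ‖(ascPochhammer ℂ n).eval c‖ :=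
    norm_pos_iff.mpr (ascPochhammer_eval_ne_zero (ne_neg_natCast_of_re_pos hc) n)
  rw [norm_mul, norm_mul _ ((ascPochhammer ℂ n).eval c)⁻¹, norm_inv, norm_inv]
  gcongr
  exact norm_ascPochhammer_eval_le hc.le hre him n

theorem tendsto_ordinaryHypergeometricCoefficient_add_natCast (a b c : ℂ) (n : ℕ) :
    Tendsto (fun m : ℕ => ordinaryHypergeometricCoefficient a b (c + m) n) atTop
      (𝓝 (if n = 0 then 1 else 0)) := by
  split_ifs with hn
  · simp [hn, ordinaryHypergeometricCoefficient]
  · have hdeg : 0 < (ascPochhammer ℂ n).degree := by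
      rw [← Polynomial.natDegree_pos_iff_degree_pos, ascPochhammer_natDegree]
      exact Nat.pos_of_ne_zero hn
    have harg : Tendsto (fun m : ℕ => ‖c + m‖) atTop atTop :=
      tendsto_norm_cobounded_atTop.comp
        ((tendsto_const_add_cobounded c).comp tendsto_natCast_atTop_cobounded)
    have hinv := tendsto_inv₀_cobounded.comp
      (tendsto_norm_atTop_iff_cobounded.mp (Polynomial.tendsto_norm_atTop _ hdeg harg))
    simpa using hinv.const_mul _

theorem tendsto_ordinaryHypergeometric_one_add_natCast (a b c : ℂ) :
    Tendsto (fun m : ℕ => ₂F₁ a b (c + m) (1 : ℂ)) atTop (𝓝 1) := by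
  obtain ⟨M, hM⟩ := exists_nat_gt (max (-c.re) (a + b - c).re)
  obtain ⟨hcM, habM⟩ := max_lt_iff.mp hM
  have hc₀ : 0 < (c + M).re := by
    simp only [add_re, natCast_re]
    linarith
  have hsum : Summable fun n => ‖ordinaryHypergeometricCoefficient a b (c + M) n‖ := by
    refine (summable_ordinaryHypergeometricCoefficient (ne_neg_natCast_of_re_pos hc₀) ?_).norm
    simp only [sub_re, add_re, natCast_re] at habM ⊢
    linarith
  simp only [ordinaryHypergeometric_one_eq_tsum]
  rw [← tsum_ite_eq (0 : ℕ) (fun _ => (1 : ℂ))]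
  refine tendsto_tsum_of_dominated_convergence hsum
    (tendsto_ordinaryHypergeometricCoefficient_add_natCast a b c) ?_
  filter_upwards [eventually_ge_atTop M] with m hm n
  refine norm_ordinaryHypergeometricCoefficient_le hc₀ ?_ (by simp) n
  simpa using hm

theorem ordinaryHypergeometric_one (hc : ∀ n : ℕ, c ≠ -n) (h : 0 < (c - a - b).re) :
    ₂F₁ a b c (1 : ℂ) = Gamma c * Gamma (c - a - b) / (Gamma (c - a) * Gamma (c - b)) := by
  have hab := ne_neg_natCast_of_re_pos h
  have hlim := (tendsto_ascPochhammer_eval_ratio_mul_cpow (c - a) (c - b) hc hab).mul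
    (tendsto_ordinaryHypergeometric_one_add_natCast a b c)
  rw [mul_one] at hlim
  refine tendsto_nhds_unique (tendsto_const_nhds.congr fun m => ?_) hlim
  have hcm := ascPochhammer_eval_ne_zero hc m
  have habm := ascPochhammer_eval_ne_zero hab m
  rw [show c + (c - a - b) - (c - a) - (c - b) = 0 by ring, cpow_zero, mul_one, div_mul_eq_mul_div,
    ← ascPochhammer_mul_ordinaryHypergeometric_one hc h, mul_div_cancel_left₀]
  exact mul_ne_zero hcm habm

end GaussSummation

section BatemanIntegral

open Complex Set

/-- The beta density `(x - t)^(c - 1) * t^(s - 1)` on `(0, x)`, weighted by the `n`-th power of the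
argument `1 - t / x` at which the Saigo kernel evaluates its hypergeometric function. -/
noncomputable def betaKernel (c s : ℂ) (x : ℝ) (n : ℕ) (t : ℝ) : ℂ :=
  ((x - t : ℝ) : ℂ) ^ (c - 1) * ((1 - t / x : ℝ) : ℂ) ^ n * (t : ℂ) ^ (s - 1)

variable {a b c s : ℂ} {x : ℝ}

theorem betaKernel_eq_inv_pow_mul_cpow_mul_cpow (c s : ℂ) (n : ℕ) {t : ℝ} (ht : t ∈ Ioo 0 x) :
    betaKernel c s x n t =
      ((x : ℂ) ^ n)⁻¹ * ((t : ℂ) ^ (s - 1) * ((x : ℂ) - t) ^ (c + n - 1)) := by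
  have hx : (x : ℂ) ≠ 0 := ofReal_ne_zero.mpr (ht.1.trans ht.2).ne'
  have hxt : (x : ℂ) - t ≠ 0 := by
    rw [← ofReal_sub]
    exact ofReal_ne_zero.mpr (sub_pos.mpr ht.2).ne'
  have hquot : (1 : ℂ) - t / x = (x - t) / x := by field_simp
  rw [betaKernel]
  push_cast
  rw [hquot, add_sub_right_comm, cpow_add _ _ hxt, cpow_natCast, div_pow]
  ring

theorem norm_betaKernel (c s : ℂ) (n : ℕ) {t : ℝ} (ht : t ∈ Ioo 0 x) :
    (‖betaKernel c s x n t‖ : ℂ) = betaKernel c.re s.re x n t := by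
  have hxt : 0 < x - t := sub_pos.mpr ht.2
  have hquot : 0 ≤ 1 - t / x := sub_nonneg.mpr ((div_le_one (ht.1.trans ht.2)).mpr ht.2.le)
  rw [betaKernel, betaKernel, norm_mul, norm_mul, norm_pow, norm_cpow_eq_rpow_re_of_pos hxt,
    norm_cpow_eq_rpow_re_of_pos ht.1, norm_real, Real.norm_of_nonneg hquot, ofReal_mul,
    ofReal_mul, ofReal_cpow hxt.le, ofReal_cpow ht.1.le]
  simp

theorem integral_betaKernel (hc : 0 < c.re) (hs : 0 < s.re) (hx : 0 < x) (n : ℕ) :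
    ∫ t in Ioo 0 x, betaKernel c s x n t =
      (x : ℂ) ^ (c + s - 1) * (Gamma c * Gamma s / Gamma (c + s)) *
        ((ascPochhammer ℂ n).eval c / (ascPochhammer ℂ n).eval (c + s)) := by
  have hx₀ : (x : ℂ) ≠ 0 := ofReal_ne_zero.mpr hx.ne'
  have hcs : 0 < (c + s).re := add_pos hc hs
  have hcn : 0 < (c + n).re := by simpa using add_pos_of_pos_of_nonneg hc n.cast_nonneg
  rw [setIntegral_congr_fun measurableSet_Ioo fun t ht =>
      betaKernel_eq_inv_pow_mul_cpow_mul_cpow c s n ht,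
    integral_const_mul, ← integral_Ioc_eq_integral_Ioo,
    ← intervalIntegral.integral_of_le hx.le, betaIntegral_scaled _ _ hx,
    betaIntegral_eq_Gamma_mul_div _ _ hs hcn, show s + (c + n) = (c + s) + n by ring,
    Gamma_add_natCast (ne_neg_natCast_of_re_pos hc),
    Gamma_add_natCast (ne_neg_natCast_of_re_pos hcs),
    add_sub_right_comm, cpow_add _ _ hx₀, cpow_natCast]
  field_simp

theorem integrableOn_betaKernel (hc : 0 < c.re) (hs : 0 < s.re) (hx : 0 < x) (n : ℕ) :
    IntegrableOn (betaKernel c s x n) (Ioo 0 x) := by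
  have hx₀ : (x : ℂ) ≠ 0 := ofReal_ne_zero.mpr hx.ne'
  have hcs : 0 < (c + s).re := add_pos hc hs
  have hΓ {z : ℂ} (hz : 0 < z.re) := Gamma_ne_zero_of_re_pos hz
  have hpoch {z : ℂ} (hz : 0 < z.re) := ascPochhammer_eval_ne_zero (ne_neg_natCast_of_re_pos hz) n
  -- A nonzero Bochner integral can only come from an integrable function.
  apply Integrable.of_integral_ne_zero
  rw [integral_betaKernel hc hs hx]
  exact mul_ne_zero (mul_ne_zero (cpow_ne_zero_iff.mpr (.inl hx₀))
    (div_ne_zero (mul_ne_zero (hΓ hc) (hΓ hs)) (hΓ hcs))) (div_ne_zero (hpoch hc) (hpoch hcs))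

theorem integral_norm_betaKernel (c s : ℂ) (x : ℝ) (n : ℕ) :
    ∫ t in Ioo 0 x, ‖betaKernel c s x n t‖ =
      ‖∫ t in Ioo 0 x, betaKernel c.re s.re x n t‖ := by
  rw [← setIntegral_congr_fun measurableSet_Ioo fun t ht => norm_betaKernel c s n ht,
    integral_complex_ofReal, norm_real,
    Real.norm_of_nonneg (integral_nonneg fun _ => norm_nonneg _)]

theorem integral_coefficient_mul_betaKernel (a b : ℂ) (hc : 0 < c.re) (hs : 0 < s.re) (hx : 0 < x)
    (n : ℕ) :
    ∫ t in Ioo 0 x, ordinaryHypergeometricCoefficient a b c n * betaKernel c s x n t =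
      (x : ℂ) ^ (c + s - 1) * (Gamma c * Gamma s / Gamma (c + s)) *
        ordinaryHypergeometricCoefficient a b (c + s) n := by
  have hpoch := ascPochhammer_eval_ne_zero (ne_neg_natCast_of_re_pos hc) n
  rw [integral_const_mul, integral_betaKernel hc hs hx]
  simp only [ordinaryHypergeometricCoefficient]
  field_simp

theorem summable_integral_norm_coefficient_mul_betaKernel (hc : 0 < c.re) (hs : 0 < s.re)
    (h : 0 < (c + s - a - b).re) (hx : 0 < x) :
    Summable fun n =>
      ∫ t in Ioo 0 x, ‖ordinaryHypergeometricCoefficient a b c n * betaKernel c s x n t‖ := by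
  have hc' : 0 < (c.re : ℂ).re := hc
  have hs' : 0 < (s.re : ℂ).re := hs
  have hcs : 0 < (c.re + s.re : ℂ).re := add_pos hc' hs'
  have h' : 0 < (c.re + s.re - a - b : ℂ).re := by simpa using h
  have hsum :=
    (summable_ordinaryHypergeometricCoefficient (ne_neg_natCast_of_re_pos hcs) h').norm
  refine .of_nonneg_of_le (fun n => integral_nonneg fun _ => norm_nonneg _) (fun n => ?_)
    (hsum.mul_left ‖(x : ℂ) ^ (c.re + s.re - 1 : ℂ) *
      (Gamma c.re * Gamma s.re / Gamma (c.re + s.re))‖)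
  have hcoeff := norm_ordinaryHypergeometricCoefficient_le (a := a) (b := b) (d := c) hc' le_rfl
    (by simp) n
  rw [← norm_mul, ← integral_coefficient_mul_betaKernel a b hc' hs' hx n, integral_const_mul,
    norm_mul, ← integral_norm_betaKernel]
  simp_rw [norm_mul _ (betaKernel c s x n _)]
  rw [integral_const_mul]
  exact mul_le_mul_of_nonneg_right hcoeff (integral_nonneg fun _ => norm_nonneg _)

theorem integral_cpow_mul_ordinaryHypergeometric_mul_cpow (hc : 0 < c.re) (hs : 0 < s.re)
    (h : 0 < (c + s - a - b).re) (hx : 0 < x) :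
    ∫ t in Ioo 0 x, ((x - t : ℝ) : ℂ) ^ (c - 1) * ₂F₁ a b c ((1 - t / x : ℝ) : ℂ) *
        (t : ℂ) ^ (s - 1) =
      (x : ℂ) ^ (c + s - 1) * (Gamma c * Gamma s / Gamma (c + s)) * ₂F₁ a b (c + s) (1 : ℂ) := by
  have hseries (t : ℝ) :
      ((x - t : ℝ) : ℂ) ^ (c - 1) * ₂F₁ a b c ((1 - t / x : ℝ) : ℂ) * (t : ℂ) ^ (s - 1) =
        ∑' n, ordinaryHypergeometricCoefficient a b c n * betaKernel c s x n t := by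
    rw [ordinaryHypergeometric_eq_tsum, ← tsum_mul_left, ← tsum_mul_right]
    refine tsum_congr fun n => ?_
    rw [betaKernel, ordinaryHypergeometricCoefficient, smul_eq_mul]
    ring
  simp only [hseries]
  rw [← integral_tsum_of_summable_integral_norm
      (fun n => (integrableOn_betaKernel hc hs hx n).const_mul _)
      (summable_integral_norm_coefficient_mul_betaKernel hc hs h hx),
    ordinaryHypergeometric_one_eq_tsum, ← tsum_mul_left]
  exact tsum_congr (integral_coefficient_mul_betaKernel a b hc hs hx)

end BatemanIntegral

/-- Saigo left-sided fractional integral of a power function (Lemma 3). -/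
theorem saigoLeft_power (δ μ ε τ : ℂ) (hδ : 0 < δ.re)
    (hτ : max 0 ((μ - ε).re) < τ.re) (x : ℝ) (hx : 0 < x) :
    saigoLeft δ μ ε (fun t => (t : ℂ) ^ (τ - 1)) x =
      Complex.Gamma τ * Complex.Gamma (τ + ε - μ) /
        (Complex.Gamma (τ - μ) * Complex.Gamma (τ + ε + δ)) * (x : ℂ) ^ (τ - μ - 1) := by
  obtain ⟨hτ₀, hτμ⟩ := max_lt_iff.mp hτ
  have hδτ : 0 < (δ + τ).re := add_pos hδ hτ₀
  have hgauss : 0 < (δ + τ - (δ + μ) - -ε).re := by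
    rw [show δ + τ - (δ + μ) - -ε = τ - (μ - ε) by ring, Complex.sub_re]
    exact sub_pos.mpr hτμ
  have hΓδ := Complex.Gamma_ne_zero_of_re_pos hδ
  have hΓδτ := Complex.Gamma_ne_zero_of_re_pos hδτ
  have hpow : (x : ℂ) ^ (τ - μ - 1) = (x : ℂ) ^ (-δ - μ) * (x : ℂ) ^ (δ + τ - 1) := by
    rw [← Complex.cpow_add _ _ (Complex.ofReal_ne_zero.mpr hx.ne')]
    congr 1
    ring
  simp only [saigoLeft, genHyp_two_one]
  rw [integral_cpow_mul_ordinaryHypergeometric_mul_cpow hδ hτ₀ hgauss hx,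
    ordinaryHypergeometric_one (ne_neg_natCast_of_re_pos hδτ) hgauss, hpow,
    show δ + τ - (δ + μ) - -ε = τ + ε - μ by ring, show δ + τ - (δ + μ) = τ - μ by ring,
    show δ + τ - -ε = τ + ε + δ by ring]
  field_simp
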